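/- Let D ⊆ ℝ² be open with coordinates (u,v), and let ω, H, Q, R, s₁, t₁, s₂, t₂ : D → ℝ be smooth with t₁ and t₂ nonvanishing, s₁s₂ + t₁t₂ = e^{ω/2}, and satisfying the Lax equations: ∂_u s₁ = (ω_u/2)s₁ + Q e^{−ω/2} t₂, ∂_u t₁ = (ω_u/2)t₁ − Q e^{−ω/2} s₂, ∂_v s₁ = (H/2)e^{ω/2} t₂, ∂_v t₁ = −(H/2)e^{ω/2} s₂, ∂_u t₂ = −(H/2)e^{ω/2} s₁, ∂_u s₂ = (H/2)e^{ω/2} t₁, ∂_v t₂ = −R e^{−ω/2} s₁ + (ω_v/2)t₂, ∂_v s₂ = R e^{−ω/2} t₁ + (ω_v/2)s₂. Set q := s₁/t₁, r := s₂/t₂, f := t₁², g := t₂². Then the projected Gauß map (q,r) satisfies: q_u = Q/f, q_v = (H/2)e^{ω}/f = (H/2)(1+qr)²g, r_u = (H/2)e^{ω}/g = (H/2)(1+qr)²f, and r_v = R/g. -/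

import Mathlib

noncomputable section

/-- The Minkowski bilinear form on `𝔼³₁ = ℝ³`: `⟨a,b⟩ = −a₁b₁ + a₂b₂ + a₃b₃`. -/
def mink (a b : ℝ × ℝ × ℝ) : ℝ := -(a.1 * b.1) + a.2.1 * b.2.1 + a.2.2 * b.2.2

/-- Partial derivative in the first coordinate. -/
def pu {E : Type*} [NormedAddCommGroup E] [NormedSpace ℝ E] (f : ℝ × ℝ → E) (w : ℝ × ℝ) : E :=
  fderiv ℝ f w (1, 0)

/-- Partial derivative in the second coordinate. -/
def pv {E : Type*} [NormedAddCommGroup E] [NormedSpace ℝ E] (f : ℝ × ℝ → E) (w : ℝ × ℝ) : E :=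
  fderiv ℝ f w (0, 1)

/-!
Along each coordinate direction the column `(s₁, t₁)` changes by a multiple `l` of itself plus a
multiple `m` of `(t₂, -s₂)`. The first part does not move the ratio `s₁ / t₁`, and the second one
moves it at speed `m * (s₁ * s₂ + t₁ * t₂) / t₁ ^ 2`, where the determinant is `e^(ω/2)`. The column
`(s₂, t₂)` behaves in the same way, with the indices exchanged.
-/

section QuotientRule

variable {𝕜 E : Type*} [NontriviallyNormedField 𝕜] [NormedAddCommGroup E] [NormedSpace 𝕜 E]
  {s t : E → 𝕜} {w : E}

theorem fderiv_div_apply (hs : DifferentiableAt 𝕜 s w) (ht : DifferentiableAt 𝕜 t w)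
    (ht₀ : t w ≠ 0) (x : E) :
    fderiv 𝕜 (fun z => s z / t z) w x
      = (fderiv 𝕜 s w x * t w - s w * fderiv 𝕜 t w x) / t w ^ 2 := by
  have hinv : HasFDerivAt (fun z => (t z)⁻¹) (-(t w ^ 2)⁻¹ • fderiv 𝕜 t w) w :=
    (hasDerivAt_inv ht₀).comp_hasFDerivAt w ht.hasFDerivAt
  have hdiv : fderiv 𝕜 (fun z => s z / t z) w
      = s w • (-(t w ^ 2)⁻¹ • fderiv 𝕜 t w) + (t w)⁻¹ • fderiv 𝕜 s w := by
    simpa only [div_eq_mul_inv] using (hs.hasFDerivAt.fun_mul hinv).fderiv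
  simp only [hdiv, add_apply, smul_apply, smul_eq_mul]
  field_simp
  ring

theorem fderiv_div_apply_of_linear_system (hs : DifferentiableAt 𝕜 s w)
    (ht : DifferentiableAt 𝕜 t w) (ht₀ : t w ≠ 0) {x : E} {l m a b : 𝕜}
    (hsx : fderiv 𝕜 s w x = l * s w + m * b) (htx : fderiv 𝕜 t w x = l * t w - m * a) :
    fderiv 𝕜 (fun z => s z / t z) w x = m * (s w * a + t w * b) / t w ^ 2 := by
  rw [fderiv_div_apply hs ht ht₀, hsx, htx]
  ring

end QuotientRule

theorem sq_mul_add_mul_div_sq {K : Type*} [Field K] {t₁ t₂ : K} (s₁ s₂ : K) (ht₁ : t₁ ≠ 0)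
    (ht₂ : t₂ ≠ 0) :
    (s₁ * s₂ + t₁ * t₂) ^ 2 / t₁ ^ 2 = (1 + s₁ / t₁ * (s₂ / t₂)) ^ 2 * t₂ ^ 2 := by
  field_simp
  ring

theorem projected_gauss_map_component_equations {E : Type*} [NormedAddCommGroup E]
    [NormedSpace ℝ E] {s t : E → ℝ} {w x y : E} {a b ω α H Q : ℝ}
    (hs : DifferentiableAt ℝ s w) (ht : DifferentiableAt ℝ t w) (ht₀ : t w ≠ 0) (hb : b ≠ 0)
    (hdet : s w * a + t w * b = Real.exp (ω / 2))
    (hsx : fderiv ℝ s w x = α * s w + Q * Real.exp (-ω / 2) * b)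
    (htx : fderiv ℝ t w x = α * t w - Q * Real.exp (-ω / 2) * a)
    (hsy : fderiv ℝ s w y = H / 2 * Real.exp (ω / 2) * b)
    (hty : fderiv ℝ t w y = -(H / 2 * Real.exp (ω / 2)) * a) :
    fderiv ℝ (fun z => s z / t z) w x = Q / t w ^ 2 ∧
    fderiv ℝ (fun z => s z / t z) w y = H / 2 * Real.exp ω / t w ^ 2 ∧
    fderiv ℝ (fun z => s z / t z) w y = H / 2 * (1 + s w / t w * (a / b)) ^ 2 * b ^ 2 := by
  have hexp_cancel : Real.exp (-ω / 2) * Real.exp (ω / 2) = 1 := by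
    rw [neg_div, ← Real.exp_add, neg_add_cancel, Real.exp_zero]
  have hexp_mul_self : Real.exp (ω / 2) * Real.exp (ω / 2) = Real.exp ω := by
    rw [← Real.exp_add, add_halves]
  have hx : fderiv ℝ (fun z => s z / t z) w x = Q / t w ^ 2 := by
    rw [fderiv_div_apply_of_linear_system hs ht ht₀ hsx htx, hdet, mul_assoc, hexp_cancel,
      mul_one]
  have hsy' : fderiv ℝ s w y = 0 * s w + H / 2 * Real.exp (ω / 2) * b := by
    rw [hsy, zero_mul, zero_add]
  have hty' : fderiv ℝ t w y = 0 * t w - H / 2 * Real.exp (ω / 2) * a := by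
    rw [hty, zero_mul, zero_sub, neg_mul]
  have hy : fderiv ℝ (fun z => s z / t z) w y = H / 2 * Real.exp ω / t w ^ 2 := by
    rw [fderiv_div_apply_of_linear_system hs ht ht₀ hsy' hty', hdet, mul_assoc, hexp_mul_self]
  refine ⟨hx, hy, ?_⟩
  calc fderiv ℝ (fun z => s z / t z) w y
    _ = H / 2 * ((s w * a + t w * b) ^ 2 / t w ^ 2) := by
      rw [hy, hdet, ← hexp_mul_self, ← sq, mul_div_assoc]
    _ = H / 2 * (1 + s w / t w * (a / b)) ^ 2 * b ^ 2 := by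
      rw [sq_mul_add_mul_div_sq _ _ ht₀ hb, mul_assoc]

theorem projected_gauss_map_equations_general {E : Type*} [NormedAddCommGroup E] [NormedSpace ℝ E]
    {s₁ t₁ s₂ t₂ : E → ℝ} {w x y : E} {ω α β H Q R : ℝ}
    (hs₁ : DifferentiableAt ℝ s₁ w) (ht₁ : DifferentiableAt ℝ t₁ w)
    (hs₂ : DifferentiableAt ℝ s₂ w) (ht₂ : DifferentiableAt ℝ t₂ w)
    (ht₁_ne : t₁ w ≠ 0) (ht₂_ne : t₂ w ≠ 0)
    (hdet : s₁ w * s₂ w + t₁ w * t₂ w = Real.exp (ω / 2))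
    (hs₁x : fderiv ℝ s₁ w x = α * s₁ w + Q * Real.exp (-ω / 2) * t₂ w)
    (ht₁x : fderiv ℝ t₁ w x = α * t₁ w - Q * Real.exp (-ω / 2) * s₂ w)
    (hs₁y : fderiv ℝ s₁ w y = H / 2 * Real.exp (ω / 2) * t₂ w)
    (ht₁y : fderiv ℝ t₁ w y = -(H / 2 * Real.exp (ω / 2)) * s₂ w)
    (ht₂x : fderiv ℝ t₂ w x = -(H / 2 * Real.exp (ω / 2)) * s₁ w)
    (hs₂x : fderiv ℝ s₂ w x = H / 2 * Real.exp (ω / 2) * t₁ w)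
    (ht₂y : fderiv ℝ t₂ w y = -(R * Real.exp (-ω / 2)) * s₁ w + β * t₂ w)
    (hs₂y : fderiv ℝ s₂ w y = R * Real.exp (-ω / 2) * t₁ w + β * s₂ w) :
    fderiv ℝ (fun z => s₁ z / t₁ z) w x = Q / t₁ w ^ 2 ∧
    fderiv ℝ (fun z => s₁ z / t₁ z) w y = H / 2 * Real.exp ω / t₁ w ^ 2 ∧
    fderiv ℝ (fun z => s₁ z / t₁ z) w y
      = H / 2 * (1 + s₁ w / t₁ w * (s₂ w / t₂ w)) ^ 2 * t₂ w ^ 2 ∧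
    fderiv ℝ (fun z => s₂ z / t₂ z) w x = H / 2 * Real.exp ω / t₂ w ^ 2 ∧
    fderiv ℝ (fun z => s₂ z / t₂ z) w x
      = H / 2 * (1 + s₁ w / t₁ w * (s₂ w / t₂ w)) ^ 2 * t₁ w ^ 2 ∧
    fderiv ℝ (fun z => s₂ z / t₂ z) w y = R / t₂ w ^ 2 := by
  have hdet_symm : s₂ w * s₁ w + t₂ w * t₁ w = Real.exp (ω / 2) := by
    rw [mul_comm (s₂ w), mul_comm (t₂ w), hdet]
  obtain ⟨hqx, hqy, hqy'⟩ := projected_gauss_map_component_equations hs₁ ht₁ ht₁_ne ht₂_ne hdet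
    hs₁x ht₁x hs₁y ht₁y
  obtain ⟨hry, hrx, hrx'⟩ := projected_gauss_map_component_equations hs₂ ht₂ ht₂_ne ht₁_ne
    hdet_symm (hs₂y.trans (add_comm _ _)) (by rw [ht₂y, neg_mul, neg_add_eq_sub]) hs₂x ht₂x
  rw [mul_comm (s₂ w / t₂ w)] at hrx'
  exact ⟨hqx, hqy, hqy', hrx, hrx', hry⟩

/-- The projected Gauß map `(q,r) = (s₁/t₁, s₂/t₂)` of a frame satisfying the Lax
equations satisfies `q_u = Q/f`, `q_v = (H/2)e^ω/f = (H/2)(1+qr)²g`,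
`r_u = (H/2)e^ω/g = (H/2)(1+qr)²f`, `r_v = R/g`, where `f = t₁²`, `g = t₂²`. -/
theorem projected_gauss_map_equations
    (D : Set (ℝ × ℝ)) (hD : IsOpen D)
    (ω H Q R s₁ t₁ s₂ t₂ : ℝ × ℝ → ℝ)
    (hω : ContDiffOn ℝ (⊤ : ℕ∞) ω D) (hH : ContDiffOn ℝ (⊤ : ℕ∞) H D)
    (hQ : ContDiffOn ℝ (⊤ : ℕ∞) Q D) (hR : ContDiffOn ℝ (⊤ : ℕ∞) R D)
    (hs₁ : ContDiffOn ℝ (⊤ : ℕ∞) s₁ D) (ht₁ : ContDiffOn ℝ (⊤ : ℕ∞) t₁ D)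
    (hs₂ : ContDiffOn ℝ (⊤ : ℕ∞) s₂ D) (ht₂ : ContDiffOn ℝ (⊤ : ℕ∞) t₂ D)
    (ht₁nz : ∀ w ∈ D, t₁ w ≠ 0) (ht₂nz : ∀ w ∈ D, t₂ w ≠ 0)
    (hdet : ∀ w ∈ D, s₁ w * s₂ w + t₁ w * t₂ w = Real.exp (ω w / 2))
    (h1 : ∀ w ∈ D, pu s₁ w = pu ω w / 2 * s₁ w + Q w * Real.exp (-ω w / 2) * t₂ w)
    (h2 : ∀ w ∈ D, pu t₁ w = pu ω w / 2 * t₁ w - Q w * Real.exp (-ω w / 2) * s₂ w)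
    (h3 : ∀ w ∈ D, pv s₁ w = H w / 2 * Real.exp (ω w / 2) * t₂ w)
    (h4 : ∀ w ∈ D, pv t₁ w = -(H w / 2 * Real.exp (ω w / 2)) * s₂ w)
    (h5 : ∀ w ∈ D, pu t₂ w = -(H w / 2 * Real.exp (ω w / 2)) * s₁ w)
    (h6 : ∀ w ∈ D, pu s₂ w = H w / 2 * Real.exp (ω w / 2) * t₁ w)
    (h7 : ∀ w ∈ D, pv t₂ w = -(R w * Real.exp (-ω w / 2)) * s₁ w + pv ω w / 2 * t₂ w)
    (h8 : ∀ w ∈ D, pv s₂ w = R w * Real.exp (-ω w / 2) * t₁ w + pv ω w / 2 * s₂ w) :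
    ∀ w ∈ D,
      pu (fun z => s₁ z / t₁ z) w = Q w / t₁ w ^ 2 ∧
      pv (fun z => s₁ z / t₁ z) w = H w / 2 * Real.exp (ω w) / t₁ w ^ 2 ∧
      pv (fun z => s₁ z / t₁ z) w
        = H w / 2 * (1 + s₁ w / t₁ w * (s₂ w / t₂ w)) ^ 2 * t₂ w ^ 2 ∧
      pu (fun z => s₂ z / t₂ z) w = H w / 2 * Real.exp (ω w) / t₂ w ^ 2 ∧
      pu (fun z => s₂ z / t₂ z) w
        = H w / 2 * (1 + s₁ w / t₁ w * (s₂ w / t₂ w)) ^ 2 * t₁ w ^ 2 ∧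
      pv (fun z => s₂ z / t₂ z) w = R w / t₂ w ^ 2 := by
  intro w hw
  have hdiff {h : ℝ × ℝ → ℝ} (hh : ContDiffOn ℝ (⊤ : ℕ∞) h D) : DifferentiableAt ℝ h w :=
    (hh.contDiffAt (hD.mem_nhds hw)).differentiableAt (by simp)
  exact projected_gauss_map_equations_general (hdiff hs₁) (hdiff ht₁) (hdiff hs₂) (hdiff ht₂)
    (ht₁nz w hw) (ht₂nz w hw) (hdet w hw) (h1 w hw) (h2 w hw) (h3 w hw) (h4 w hw) (h5 w hw)
    (h6 w hw) (h7 w hw) (h8 w hw)
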